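/- Let μ, δ ∈ ℝ and 0 < ρ < 1, and let e^{μ,δ}_{1,ρ}(z) = Σ_{n=0}^∞ z^n/(Γ(n+μ)·Γ(δ−ρn)). Then e^{μ,δ}_{1,ρ} is differentiable on ℝ and for every z ∈ ℝ one has ρ·z·(d/dz) e^{μ,δ}_{1,ρ}(z) = −( e^{μ,δ−1}_{1,ρ}(z) + (1−δ)·e^{μ,δ}_{1,ρ}(z) ). -/

import Mathlib

/- The Wright-type function `e^{μ,δ}_{1,ρ}(z) = Σ_{n≥0} zⁿ/(Γ(n+μ)·Γ(δ−ρn))`;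
`Real.Gamma` vanishes at nonpositive integers, realizing the convention `1/Γ = 0` there. -/
noncomputable def wrightE (ρ μ δ z : ℝ) : ℝ :=
  ∑' n : ℕ, z ^ n / (Real.Gamma ((n : ℝ) + μ) * Real.Gamma (δ - ρ * n))

open Filter Topology

/-- A consequence of log-convexity of `Γ`. -/
theorem Real.Gamma_add_le_rpow_mul_Gamma {x ρ : ℝ} (hx : 0 < x) (hρ0 : 0 < ρ) (hρ1 : ρ < 1) :
    Real.Gamma (x + ρ) ≤ x ^ ρ * Real.Gamma x := by
  have hΓ := Real.Gamma_pos_of_pos hx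
  have h := Real.Gamma_mul_add_mul_le_rpow_Gamma_mul_rpow_Gamma hx (by linarith : 0 < x + 1)
    (sub_pos.2 hρ1) hρ0 (by ring)
  rw [Real.Gamma_add_one hx.ne', Real.mul_rpow hx.le hΓ.le,
    show (1 - ρ) * x + ρ * (x + 1) = x + ρ by ring] at h
  calc Real.Gamma (x + ρ) ≤ _ := h
    _ = x ^ ρ * (Real.Gamma x ^ (1 - ρ) * Real.Gamma x ^ ρ) := by ring
    _ = x ^ ρ * Real.Gamma x := by rw [← Real.rpow_add hΓ]; simp

theorem Real.inv_Gamma_eq_self_mul_inv_Gamma_add_one (s : ℝ) :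
    (Real.Gamma s)⁻¹ = s * (Real.Gamma (s + 1))⁻¹ := by
  rcases eq_or_ne s 0 with rfl | hs
  · simp
  · rw [Real.Gamma_add_one hs, mul_inv, mul_inv_cancel_left₀ hs]

/-- A bound from the reflection formula. -/
theorem Real.abs_inv_Gamma_le_Gamma_one_sub {s : ℝ} (hs : s < 1) :
    |(Real.Gamma s)⁻¹| ≤ Real.Gamma (1 - s) := by
  have hpos : 0 < Real.Gamma (1 - s) := Real.Gamma_pos_of_pos (by linarith)
  rcases eq_or_ne (Real.Gamma s) 0 with h0 | h0
  · simpa [h0] using hpos.le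
  have hsin : Real.sin (Real.pi * s) ≠ 0 := by
    intro h
    have := Real.Gamma_mul_Gamma_one_sub s
    rw [h, div_zero] at this
    exact mul_ne_zero h0 hpos.ne' this
  have hinv : (Real.Gamma s)⁻¹ = Real.Gamma (1 - s) * (Real.sin (Real.pi * s) / Real.pi) := by
    have := Real.Gamma_mul_Gamma_one_sub s
    have hpi := Real.pi_ne_zero
    rw [eq_div_iff hsin] at this
    apply inv_eq_of_mul_eq_one_right
    rw [← mul_assoc, ← mul_div_assoc, this, div_self hpi]
  rw [hinv, abs_mul, abs_of_pos hpos, abs_div, abs_of_pos Real.pi_pos]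
  refine mul_le_of_le_one_right hpos.le ?_
  rw [div_le_one Real.pi_pos]
  linarith [Real.abs_sin_le_one (Real.pi * s), Real.pi_gt_three]

theorem summable_Gamma_div_Gamma_mul_pow {ρ : ℝ} (hρ0 : 0 < ρ) (hρ1 : ρ < 1) (c μ r : ℝ) :
    Summable fun n : ℕ => Real.Gamma (ρ * n + c) / Real.Gamma (n + μ) * r ^ n := by
  have hn : Tendsto (fun n : ℕ => (n : ℝ)) atTop atTop := tendsto_natCast_atTop_atTop
  have hx : Tendsto (fun n : ℕ => ρ * (n : ℝ) + c) atTop atTop :=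
    tendsto_atTop_add_const_right _ _ (hn.const_mul_atTop hρ0)
  have hy : Tendsto (fun n : ℕ => (n : ℝ) + μ) atTop atTop :=
    tendsto_atTop_add_const_right _ _ hn
  have hxy : Tendsto (fun n : ℕ => (1 - ρ) * (n : ℝ) + (μ - c)) atTop atTop :=
    tendsto_atTop_add_const_right _ _ (hn.const_mul_atTop (sub_pos.2 hρ1))
  have hsmall : Tendsto (fun n : ℕ => ((n : ℝ) + μ) ^ (-(1 - ρ)) * |r|) atTop (𝓝 0) := by
    simpa using ((tendsto_rpow_neg_atTop (sub_pos.2 hρ1)).comp hy).mul_const |r|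
  refine summable_of_ratio_norm_eventually_le (r := 1 / 2) (by norm_num) ?_
  filter_upwards [hx.eventually_gt_atTop 0, hy.eventually_gt_atTop 0,
    hxy.eventually_ge_atTop 0, hsmall.eventually_le_const (by norm_num : (0 : ℝ) < 1 / 2)]
    with n hx hy hxy hsmall
  set x := ρ * (n : ℝ) + c with hxdef
  set y := (n : ℝ) + μ with hydef
  have hΓx := Real.Gamma_pos_of_pos hx
  have hΓy := Real.Gamma_pos_of_pos hy
  have hΓxρ : 0 < Real.Gamma (x + ρ) := Real.Gamma_pos_of_pos (by linarith)
  have hpow : x ^ ρ ≤ y * y ^ (-(1 - ρ)) := by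
    calc x ^ ρ ≤ y ^ ρ := Real.rpow_le_rpow hx.le (by linarith) hρ0.le
      _ = y ^ (1 + -(1 - ρ)) := by congr 1; ring
      _ = y * y ^ (-(1 - ρ)) := by rw [Real.rpow_add hy, Real.rpow_one]
  rw [show ρ * ((n + 1 : ℕ) : ℝ) + c = x + ρ by push_cast; ring,
    show ((n + 1 : ℕ) : ℝ) + μ = y + 1 by push_cast; ring, Real.Gamma_add_one hy.ne']
  simp only [norm_mul, norm_div, norm_pow, Real.norm_eq_abs, abs_of_pos hΓx, abs_of_pos hΓy,
    abs_of_pos hΓxρ, abs_of_pos hy]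
  calc Real.Gamma (x + ρ) / (y * Real.Gamma y) * |r| ^ (n + 1)
      ≤ (y * y ^ (-(1 - ρ)) * Real.Gamma x) / (y * Real.Gamma y) * |r| ^ (n + 1) := by
        gcongr
        exact (Real.Gamma_add_le_rpow_mul_Gamma hx hρ0 hρ1).trans (by gcongr)
    _ = (y ^ (-(1 - ρ)) * |r|) * (Real.Gamma x / Real.Gamma y * |r| ^ n) := by
        field_simp
        ring
    _ ≤ 1 / 2 * (Real.Gamma x / Real.Gamma y * |r| ^ n) := by gcongr

theorem summable_wrightE {ρ : ℝ} (hρ0 : 0 < ρ) (hρ1 : ρ < 1) (μ δ r : ℝ) :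
    Summable fun n : ℕ => (Real.Gamma (n + μ) * Real.Gamma (δ - ρ * n))⁻¹ * r ^ n := by
  refine (summable_Gamma_div_Gamma_mul_pow hρ0 hρ1 (1 - δ) μ r).norm.of_norm_bounded_eventually_nat
    ?_
  have hx : Tendsto (fun n : ℕ => ρ * (n : ℝ) + (1 - δ)) atTop atTop :=
    tendsto_atTop_add_const_right _ _ (tendsto_natCast_atTop_atTop.const_mul_atTop hρ0)
  filter_upwards [hx.eventually_gt_atTop 0] with n hn
  have h := Real.abs_inv_Gamma_le_Gamma_one_sub (s := δ - ρ * n) (by linarith)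
  rw [show 1 - (δ - ρ * n) = ρ * n + (1 - δ) by ring] at h
  rw [mul_inv, div_eq_inv_mul]
  simp only [norm_mul, Real.norm_eq_abs]
  gcongr _ * ?_ * _
  exact h.trans (le_abs_self _)

/-- Termwise differentiation of an everywhere convergent real power series. -/
theorem hasDerivAt_tsum_mul_pow {a : ℕ → ℝ} (ha : ∀ r : ℝ, Summable fun n => a n * r ^ n)
    (z : ℝ) :
    HasDerivAt (fun w => ∑' n, a n * w ^ n) (∑' n : ℕ, a n * (n * z ^ (n - 1))) z := by
  set R : ℝ := |z| + 1 with hR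
  have hR1 : 1 ≤ R := by simp [hR]
  refine hasDerivAt_tsum_of_isPreconnected (t := Metric.ball (0 : ℝ) R) (y₀ := 0)
    (ha (2 * R)).norm Metric.isOpen_ball (convex_ball _ _).isPreconnected
    (fun n w _ => (hasDerivAt_pow n w).const_mul (a n)) (fun n w hw => ?_)
    (Metric.mem_ball_self (by linarith)) (ha 0) (by simp [hR])
  have hw' : |w| ≤ R := by simpa using (Metric.mem_ball.1 hw).le
  have h2 : (n : ℝ) ≤ 2 ^ n := by exact_mod_cast n.lt_two_pow_self.le
  simp only [norm_mul, norm_pow, Real.norm_eq_abs, Nat.abs_cast, abs_two, mul_pow,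
    abs_of_nonneg (zero_le_one.trans hR1)]
  gcongr
  calc |w| ^ (n - 1) ≤ R ^ (n - 1) := by gcongr
    _ ≤ R ^ n := pow_le_pow_right₀ hR1 (Nat.sub_le n 1)

theorem wrightE_eq_tsum (ρ μ δ z : ℝ) :
    wrightE ρ μ δ z =
      ∑' n : ℕ, (Real.Gamma (n + μ) * Real.Gamma (δ - ρ * n))⁻¹ * z ^ n := by
  simp only [wrightE, div_eq_inv_mul]

/- STATEMENT 8: first differentiation formula in (3.2):
`ρ·z·(e^{μ,δ}_{1,ρ})′(z) = −( e^{μ,δ−1}_{1,ρ}(z) + (1−δ)·e^{μ,δ}_{1,ρ}(z) )`. -/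
theorem wright_deriv_formula (μ δ ρ : ℝ) (hρ0 : 0 < ρ) (hρ1 : ρ < 1) :
    Differentiable ℝ (fun z : ℝ => wrightE ρ μ δ z) ∧
    ∀ z : ℝ, ρ * z * deriv (fun w : ℝ => wrightE ρ μ δ w) z =
      -(wrightE ρ μ (δ - 1) z + (1 - δ) * wrightE ρ μ δ z) := by
  have hderiv := hasDerivAt_tsum_mul_pow (summable_wrightE hρ0 hρ1 μ δ)
  simp only [wrightE_eq_tsum]
  refine ⟨fun z => (hderiv z).differentiableAt, fun z => ?_⟩
  rw [(hderiv z).deriv, ← tsum_mul_left, ← tsum_mul_left,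
    ← (summable_wrightE hρ0 hρ1 μ (δ - 1) z).tsum_add
      ((summable_wrightE hρ0 hρ1 μ δ z).mul_left _), ← tsum_neg]
  refine tsum_congr fun n => ?_
  have hrec := Real.inv_Gamma_eq_self_mul_inv_Gamma_add_one (δ - 1 - ρ * n)
  rw [show δ - 1 - ρ * n + 1 = δ - ρ * n by ring] at hrec
  have hpow : z * (n * z ^ (n - 1)) = n * z ^ n := by
    cases n with
    | zero => simp
    | succ k => rw [Nat.add_sub_cancel, pow_succ]; ring
  rw [mul_inv, mul_inv, hrec]
  linear_combination ρ * (Real.Gamma (n + μ))⁻¹ * (Real.Gamma (δ - ρ * n))⁻¹ * hpow
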